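/- Let d ≥ 1 and let σ be the rotation-invariant (normalized uniform) probability measure on the unit sphere of EuclideanSpace ℂ (Fin d). Then for every natural number n and all x, y : Fin n → Fin d, C(n+d−1, n) · ∫_{unit sphere} (∏_{i : Fin n} ψ (x i)) · conj(∏_{i : Fin n} ψ (y i)) dσ(ψ) = (#{π ∈ Perm(Fin n) : x ∘ π = y}) / n!. -/

import Mathlib

open MeasureTheory

/-- The Borel measurable structure on `ℂ^d` (as a Euclidean space). -/
noncomputable instance euclideanSpaceComplexMeasurableSpace (d : ℕ) :
    MeasurableSpace (EuclideanSpace ℂ (Fin d)) := borel _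

instance euclideanSpaceComplexBorelSpace (d : ℕ) :
    BorelSpace (EuclideanSpace ℂ (Fin d)) := ⟨rfl⟩

/-!
Write `ψ_x` and `v_x` for the coordinates of `ψ^⊗n` and `v^⊗n`, and `F x y` for the integral of
`ψ_x * conj ψ_y`. Since the unitary group acts transitively on spheres,
`∑ F x y * conj v_x * v_y = ∫ |⟪v, ψ⟫|^(2n) = c * ‖v‖^(2n)` with `c` independent of `v`. The count
`S x y` of permutations carrying `x` to `y` satisfies the same identity with `n!` in place of `c`.
As `F` and `S` are invariant under permuting either tuple, and a polynomial in `v` and `conj v`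
that vanishes everywhere is zero, it follows that `n! * F = c * S`. Taking traces determines `c`:
the trace of `F` is `1`, while that of `S` is `n!` times the number of orbits of tuples, that is,
of multisets of size `n` in `d` letters.
-/

open Finset
open scoped ComplexConjugate InnerProductSpace Nat

section Tuples

variable {ι κ : Type*} [Fintype ι]

/-- The unordered tuple underlying a tuple `x`. Two tuples have the same image exactly when they
differ by a permutation of the positions, so this is the quotient by the permutation action. -/
def symOfTuple (x : ι → κ) : Sym κ (Fintype.card ι) :=
  ⟨univ.val.map x, by simp⟩

theorem symOfTuple_surjective : Function.Surjective (symOfTuple : (ι → κ) → Sym κ _) := by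
  classical
  rintro ⟨s, hs⟩
  have card_eq : Fintype.card ι = Fintype.card s := by rw [Multiset.card_coe, hs]
  refine ⟨fun i ↦ (Fintype.equivOfCardEq card_eq i : s), Subtype.ext ?_⟩
  change univ.val.map ((fun a : s ↦ (a : κ)) ∘ Fintype.equivOfCardEq card_eq) = s
  rw [← Multiset.map_map, Multiset.map_univ_val_equiv, Multiset.map_univ_coe]

theorem symOfTuple_comp_perm (x : ι → κ) (π : Equiv.Perm ι) :
    symOfTuple (x ∘ π) = symOfTuple x := by
  refine Subtype.ext ?_
  change univ.val.map (x ∘ π) = univ.val.map x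
  rw [← Multiset.map_map, Multiset.map_univ_val_equiv]

theorem count_symOfTuple [DecidableEq κ] (x : ι → κ) (k : κ) :
    Multiset.count k (symOfTuple x : Multiset κ) = Fintype.card {i // x i = k} := by
  change Multiset.count k (univ.val.map x) = _
  rw [Multiset.count_map, Fintype.card_subtype]
  simp only [eq_comm, Finset.card, Finset.filter_val]

theorem symOfTuple_eq_iff_exists_perm {x y : ι → κ} :
    symOfTuple x = symOfTuple y ↔ ∃ π : Equiv.Perm ι, x ∘ π = y := by
  classical
  refine ⟨fun h ↦ ?_, ?_⟩
  · have fiberEquiv (k : κ) : Nonempty ({i // y i = k} ≃ {i // x i = k}) :=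
      Fintype.card_eq.mp (by rw [← count_symOfTuple x, ← count_symOfTuple y, h])
    exact ⟨Equiv.ofFiberEquiv fun k ↦ (fiberEquiv k).some,
      funext (Equiv.ofFiberEquiv_map fun k ↦ (fiberEquiv k).some)⟩
  · rintro ⟨π, rfl⟩
    exact (symOfTuple_comp_perm x π).symm

theorem sum_pow_card_eq_sum_prod {R : Type*} [CommSemiring R] [Fintype κ] [DecidableEq ι]
    (f : κ → R) : (∑ k, f k) ^ Fintype.card ι = ∑ x : ι → κ, ∏ i, f (x i) := by
  rw [← Finset.card_univ, ← Finset.prod_const, Finset.prod_univ_sum, Fintype.piFinset_univ]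

end Tuples

section PermCount

variable {ι κ : Type*} [Fintype ι] [DecidableEq ι] [DecidableEq κ]

/-- The number of permutations carrying the tuple `x` to the tuple `y`: this is `n!` times the
`(x, y)` entry of the projector onto the symmetric subspace of the `n`-th tensor power. -/
def permCount (x y : ι → κ) : ℕ :=
  #{π : Equiv.Perm ι | x ∘ π = y}

theorem permCount_comp_perm_left (x y : ι → κ) (τ : Equiv.Perm ι) :
    permCount (x ∘ τ) y = permCount x y :=
  Finset.card_equiv (Equiv.mulLeft τ) fun π ↦ by simp [Function.comp_assoc]

theorem permCount_comp_perm_right (x y : ι → κ) (τ : Equiv.Perm ι) :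
    permCount x (y ∘ τ) = permCount x y :=
  Finset.card_equiv (Equiv.mulRight τ⁻¹) fun π ↦ by
    simp [← Function.comp_assoc, Equiv.comp_symm_eq]

theorem permCount_eq_zero_of_symOfTuple_ne {x y : ι → κ} (h : symOfTuple x ≠ symOfTuple y) :
    permCount x y = 0 :=
  Finset.card_eq_zero.mpr <| Finset.filter_eq_empty_iff.mpr fun π _ hπ ↦
    h (symOfTuple_eq_iff_exists_perm.mpr ⟨π, hπ⟩)

variable [Fintype κ]

theorem sum_permCount_mul {R : Type*} [Semiring R] (x : ι → κ) (f : (ι → κ) → R) :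
    ∑ y, (permCount x y : R) * f y = ∑ π : Equiv.Perm ι, f (x ∘ π) := by
  rw [← Finset.sum_fiberwise univ (fun π : Equiv.Perm ι ↦ x ∘ π)]
  refine Finset.sum_congr rfl fun y _ ↦ ?_
  rw [Finset.sum_congr rfl fun π hπ ↦ congrArg f (Finset.mem_filter.mp hπ).2,
    Finset.sum_const, nsmul_eq_mul, permCount]

theorem sum_permCount_right (x : ι → κ) : ∑ y, permCount x y = (Fintype.card ι)! := by
  simpa [Fintype.card_perm] using sum_permCount_mul (R := ℕ) x 1

theorem sum_permCount_self_of_symOfTuple_eq (s : Sym κ (Fintype.card ι)) :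
    ∑ x with symOfTuple x = s, permCount x x = (Fintype.card ι)! := by
  obtain ⟨z, rfl⟩ := symOfTuple_surjective s
  rw [← sum_permCount_right z, Finset.sum_filter]
  refine Finset.sum_congr rfl fun x _ ↦ ?_
  split_ifs with h
  · obtain ⟨τ, rfl⟩ := symOfTuple_eq_iff_exists_perm.mp h.symm
    exact permCount_comp_perm_left z _ τ
  · exact (permCount_eq_zero_of_symOfTuple_ne (Ne.symm h)).symm

theorem sum_permCount_self :
    ∑ x : ι → κ, permCount x x =
      (Fintype.card ι)! * (Fintype.card ι + Fintype.card κ - 1).choose (Fintype.card ι) := by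
  rw [← Finset.sum_fiberwise univ symOfTuple]
  simp only [sum_permCount_self_of_symOfTuple_eq, Finset.sum_const, Finset.card_univ, smul_eq_mul]
  rw [Sym.card_sym_eq_choose, mul_comm, Nat.add_comm (Fintype.card κ)]

end PermCount

section PolynomialIdentities

variable {ι ι' κ : Type*} [Fintype ι] [Fintype ι']

theorem eval_monomial_symOfTuple {R : Type*} [CommSemiring R] [DecidableEq κ] (v : κ → R)
    (x : ι → κ) (r : R) :
    MvPolynomial.eval v (MvPolynomial.monomial (symOfTuple x : Multiset κ).toFinsupp r) =
      r * ∏ i, v (x i) := by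
  have prod_eq : ((symOfTuple x : Multiset κ).map v).prod = ∏ i, v (x i) :=
    congrArg Multiset.prod (Multiset.map_map v x univ.val)
  rw [MvPolynomial.eval_monomial, ← prod_eq, Finset.prod_multiset_map_count, Finsupp.prod,
    Multiset.toFinsupp_support]
  simp only [Multiset.toFinsupp_apply]

theorem mvPolynomial_eq_zero_of_eval_conj_eq_zero {P : MvPolynomial (κ ⊕ κ) ℂ}
    (hP : ∀ v : κ → ℂ, MvPolynomial.eval (Sum.elim (fun k ↦ conj (v k)) v) P = 0) : P = 0 := by
  -- Substituting `a - i b` for `conj v` and `a + i b` for `v` is an invertible change of variables,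
  -- and real points `(a, b)` are Zariski dense.
  let Q : MvPolynomial (κ ⊕ κ) ℂ := MvPolynomial.bind₁ (Sum.elim
    (fun k ↦ .X (.inl k) - .C Complex.I * .X (.inr k))
    (fun k ↦ .X (.inl k) + .C Complex.I * .X (.inr k))) P
  have eval_Q (w : κ ⊕ κ → ℂ) : MvPolynomial.eval w Q = MvPolynomial.eval (Sum.elim
      (fun k ↦ w (.inl k) - Complex.I * w (.inr k))
      (fun k ↦ w (.inl k) + Complex.I * w (.inr k))) P := by
    rw [MvPolynomial.eval, MvPolynomial.eval₂Hom_bind₁, MvPolynomial.eval]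
    congr 2
    ext (k | k) <;> simp
  have Q_eq_zero : Q = 0 := by
    refine MvPolynomial.funext_set (fun _ ↦ Set.range Complex.ofReal)
      (fun _ ↦ Set.infinite_range_of_injective Complex.ofReal_injective) fun w hw ↦ ?_
    choose r hr using fun j ↦ hw j (Set.mem_univ j)
    rw [eval_Q, map_zero, ← hP fun k ↦ w (.inl k) + Complex.I * w (.inr k)]
    simp [← hr, sub_eq_add_neg]
  refine MvPolynomial.funext fun u ↦ ?_
  have eval_inverse := eval_Q (Sum.elim (fun k ↦ (u (.inl k) + u (.inr k)) / 2)
    (fun k ↦ (u (.inr k) - u (.inl k)) / (2 * Complex.I)))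
  rw [Q_eq_zero, map_zero] at eval_inverse
  rw [map_zero, eval_inverse]
  congr 2
  ext (k | k) <;> simp only [Sum.elim_inl, Sum.elim_inr] <;> field_simp <;> ring

variable [Fintype κ] [DecidableEq ι] [DecidableEq ι']

theorem eq_zero_of_sum_mul_prod_eq_zero {R : Type*} [CommRing R] [IsDomain R] [CharZero R]
    {g : (ι → κ) → R} (g_perm : ∀ x (π : Equiv.Perm ι), g (x ∘ π) = g x)
    (g_sum : ∀ v : κ → R, ∑ x, g x * ∏ i, v (x i) = 0) (z : ι → κ) : g z = 0 := by
  classical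
  let P : MvPolynomial κ R :=
    ∑ x, MvPolynomial.monomial (symOfTuple x : Multiset κ).toFinsupp (g x)
  have P_eq_zero : P = 0 := MvPolynomial.funext fun v ↦ by
    simp only [P, map_sum, eval_monomial_symOfTuple, g_sum, map_zero]
  have coeff_eq_zero : ∑ x with symOfTuple x = symOfTuple z, g x = 0 := by
    have := congrArg (MvPolynomial.coeff (symOfTuple z : Multiset κ).toFinsupp) P_eq_zero
    simpa only [P, MvPolynomial.coeff_sum, MvPolynomial.coeff_monomial, MvPolynomial.coeff_zero,
      EmbeddingLike.apply_eq_iff_eq, Sym.coe_inj, ← Finset.sum_filter] using this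
  have g_const : ∀ x ∈ ({x | symOfTuple x = symOfTuple z} : Finset (ι → κ)), g x = g z := by
    intro x hx
    obtain ⟨π, rfl⟩ := symOfTuple_eq_iff_exists_perm.mp (Finset.mem_filter.mp hx).2
    exact (g_perm x π).symm
  rw [Finset.sum_congr rfl g_const, Finset.sum_const, smul_eq_zero] at coeff_eq_zero
  exact coeff_eq_zero.resolve_left (Finset.card_ne_zero_of_mem (a := z) (by simp))

theorem eq_zero_of_sum_mul_conj_prod_mul_prod_eq_zero {G : (ι → κ) → (ι' → κ) → ℂ}
    (G_perm_left : ∀ x y (π : Equiv.Perm ι), G (x ∘ π) y = G x y)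
    (G_perm_right : ∀ x y (π : Equiv.Perm ι'), G x (y ∘ π) = G x y)
    (G_sum : ∀ v : κ → ℂ, ∑ x, ∑ y, G x y * (conj (∏ i, v (x i)) * ∏ j, v (y j)) = 0)
    (x : ι → κ) (y : ι' → κ) : G x y = 0 := by
  let P : MvPolynomial (κ ⊕ κ) ℂ := ∑ x, ∑ y,
    .C (G x y) * ((∏ i, .X (.inl (x i))) * ∏ j, .X (.inr (y j)))
  have P_eq_zero : P = 0 := mvPolynomial_eq_zero_of_eval_conj_eq_zero fun v ↦ by
    simpa [P] using G_sum v
  have polarized (u w : κ → ℂ) : ∑ x, (∑ y, G x y * ∏ j, w (y j)) * ∏ i, u (x i) = 0 := by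
    have := congrArg (MvPolynomial.eval (Sum.elim u w)) P_eq_zero
    simpa [P, Finset.sum_mul, mul_assoc, mul_comm (∏ _, u _)] using this
  have row_eq_zero (w : κ → ℂ) : ∑ y, G x y * ∏ j, w (y j) = 0 :=
    eq_zero_of_sum_mul_prod_eq_zero (g := fun x ↦ ∑ y, G x y * ∏ j, w (y j))
      (fun x π ↦ by simp only [G_perm_left]) (fun u ↦ polarized u w) x
  exact eq_zero_of_sum_mul_prod_eq_zero (G_perm_right x) row_eq_zero y

end PolynomialIdentities

section UnitaryInvariance

theorem exists_linearIsometryEquiv_apply_eq {𝕜 E : Type*} [RCLike 𝕜] [NormedAddCommGroup E]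
    [InnerProductSpace 𝕜 E] [FiniteDimensional 𝕜 E] {u v : E} (h : ‖u‖ = ‖v‖) :
    ∃ U : E ≃ₗᵢ[𝕜] E, U u = v := by
  rcases eq_or_ne u 0 with rfl | hu
  · exact ⟨.refl 𝕜 E, by simpa [eq_comm] using h⟩
  let coord := LinearEquiv.toSpanNonzeroSingleton 𝕜 E u hu
  have norm_coord (c : 𝕜) : ‖coord c‖ = ‖c‖ * ‖u‖ := by simp [coord, norm_smul]
  let L : (𝕜 ∙ u) →ₗᵢ[𝕜] E :=
    { toLinearMap := LinearMap.toSpanSingleton 𝕜 E v ∘ₗ coord.symm.toLinearMap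
      norm_map' := fun w ↦ by
        obtain ⟨c, rfl⟩ := coord.surjective w
        simp [norm_coord, norm_smul, h] }
  refine ⟨L.extend.toLinearIsometryEquiv rfl, ?_⟩
  have L_apply : L (coord 1) = v := by simp [L]
  rw [LinearIsometry.toLinearIsometryEquiv_apply, ← L_apply, ← L.extend_apply]
  simp [coord]

variable {E : Type*} [NormedAddCommGroup E] [InnerProductSpace ℂ E]

/-- The action of a unitary operator on the unit sphere, as a homeomorphism so that integrals can
be transported along it without measurability side conditions. -/
noncomputable def unitarySphereHomeomorph (U : E ≃ₗᵢ[ℂ] E) :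
    Metric.sphere (0 : E) 1 ≃ₜ Metric.sphere (0 : E) 1 :=
  U.toHomeomorph.subtype fun ψ ↦ by simp

variable [MeasurableSpace E]

/-- Invariance of a measure on the unit sphere under all unitary operators; for a probability
measure in finite dimension this characterizes the uniform measure. -/
def IsUnitarilyInvariant (σ : Measure (Metric.sphere (0 : E) 1)) : Prop :=
  ∀ U : E ≃ₗᵢ[ℂ] E, σ.map (unitarySphereHomeomorph U) = σ

variable [BorelSpace E] {σ : Measure (Metric.sphere (0 : E) 1)}

theorem integral_comp_inner_eq_of_norm_eq [FiniteDimensional ℂ E] (hσ : IsUnitarilyInvariant σ)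
    {F : Type*} [NormedAddCommGroup F] [NormedSpace ℝ F] (f : ℂ → F) {u v : E} (h : ‖u‖ = ‖v‖) :
    ∫ ψ, f ⟪u, (ψ : E)⟫_ℂ ∂σ = ∫ ψ, f ⟪v, (ψ : E)⟫_ℂ ∂σ := by
  obtain ⟨U, rfl⟩ := exists_linearIsometryEquiv_apply_eq (𝕜 := ℂ) h
  conv_rhs => rw [← hσ U, (unitarySphereHomeomorph U).measurableEmbedding.integral_map]
  exact integral_congr_ae (.of_forall fun ψ ↦ congrArg f (U.inner_map_map u ψ).symm)

theorem integral_norm_inner_pow [FiniteDimensional ℂ E] (hσ : IsUnitarilyInvariant σ) (n : ℕ)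
    {u : E} (hu : ‖u‖ = 1) (v : E) :
    ∫ ψ, ‖⟪v, (ψ : E)⟫_ℂ‖ ^ n ∂σ = ‖v‖ ^ n * ∫ ψ, ‖⟪u, (ψ : E)⟫_ℂ‖ ^ n ∂σ := by
  have norm_eq : ‖v‖ = ‖(‖v‖ : ℂ) • u‖ := by simp [norm_smul, hu]
  rw [integral_comp_inner_eq_of_norm_eq hσ (fun z ↦ ‖z‖ ^ n) norm_eq, ← integral_const_mul]
  simp [mul_pow]

end UnitaryInvariance

section SphereMoments

variable {ι κ E : Type*} [Fintype ι] [Fintype κ] [NormedAddCommGroup E] [InnerProductSpace ℂ E]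

/-- The `x`-th coordinate of the tensor power `ψ ⊗ ⋯ ⊗ ψ`, with factors indexed by `ι`, in the
product basis induced by `b`. -/
noncomputable def tensorPowerCoord (b : OrthonormalBasis κ ℂ E) (ψ : E) (x : ι → κ) : ℂ :=
  ∏ i, b.repr ψ (x i)

variable (b : OrthonormalBasis κ ℂ E)

theorem tensorPowerCoord_comp_perm (ψ : E) (x : ι → κ) (π : Equiv.Perm ι) :
    tensorPowerCoord b ψ (x ∘ π) = tensorPowerCoord b ψ x :=
  Equiv.prod_comp π fun i ↦ b.repr ψ (x i)

theorem continuous_tensorPowerCoord (x : ι → κ) :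
    Continuous fun ψ : E ↦ tensorPowerCoord b ψ x := by
  unfold tensorPowerCoord
  fun_prop

theorem sum_conj_tensorPowerCoord_mul [DecidableEq ι] (χ ψ : E) :
    ∑ x : ι → κ, conj (tensorPowerCoord b χ x) * tensorPowerCoord b ψ x =
      ⟪χ, ψ⟫_ℂ ^ Fintype.card ι := by
  rw [← b.repr.inner_map_map, PiLp.inner_apply, sum_pow_card_eq_sum_prod]
  simp only [tensorPowerCoord, map_prod, ← Finset.prod_mul_distrib, RCLike.inner_apply, mul_comm]

theorem sum_permCount_mul_conj_tensorPowerCoord_mul [DecidableEq ι] [DecidableEq κ] (v : E) :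
    ∑ x : ι → κ, ∑ y, (permCount x y : ℂ) *
        (conj (tensorPowerCoord b v x) * tensorPowerCoord b v y) =
      (Fintype.card ι)! * (‖v‖ : ℂ) ^ (2 * Fintype.card ι) := by
  simp only [sum_permCount_mul, tensorPowerCoord_comp_perm, Finset.sum_const, Finset.card_univ,
    Fintype.card_perm, nsmul_eq_mul, ← Finset.mul_sum, sum_conj_tensorPowerCoord_mul,
    inner_self_eq_norm_sq_to_K, pow_mul, Complex.coe_algebraMap]

variable [MeasurableSpace E]

/-- The `(x, y)` entry, in the product basis induced by `b`, of the `σ`-average of the rank-one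
projectors onto the tensor powers `ψ ⊗ ⋯ ⊗ ψ` of the unit vectors `ψ`. -/
noncomputable def sphereMoment (σ : Measure (Metric.sphere (0 : E) 1)) (x y : ι → κ) : ℂ :=
  ∫ ψ : Metric.sphere (0 : E) 1, tensorPowerCoord b ψ x * conj (tensorPowerCoord b ψ y) ∂σ

variable (σ : Measure (Metric.sphere (0 : E) 1))

theorem sphereMoment_comp_perm_left (x y : ι → κ) (π : Equiv.Perm ι) :
    sphereMoment b σ (x ∘ π) y = sphereMoment b σ x y := by
  simp only [sphereMoment, tensorPowerCoord_comp_perm]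

theorem sphereMoment_comp_perm_right (x y : ι → κ) (π : Equiv.Perm ι) :
    sphereMoment b σ x (y ∘ π) = sphereMoment b σ x y := by
  simp only [sphereMoment, tensorPowerCoord_comp_perm]

variable [BorelSpace E]

theorem integrable_tensorPowerCoord_mul_conj [IsFiniteMeasure σ] (x y : ι → κ) :
    Integrable (fun ψ : Metric.sphere (0 : E) 1 ↦
      tensorPowerCoord b (ψ : E) x * conj (tensorPowerCoord b (ψ : E) y)) σ := by
  have : FiniteDimensional ℂ E := b.toBasis.finiteDimensional_of_finite
  have : ProperSpace E := FiniteDimensional.proper_rclike ℂ E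
  have cont (z : ι → κ) :
      Continuous fun ψ : Metric.sphere (0 : E) 1 ↦ tensorPowerCoord b (ψ : E) z :=
    (continuous_tensorPowerCoord b z).comp continuous_subtype_val
  exact ((cont x).mul (Complex.continuous_conj.comp (cont y))).integrable_of_hasCompactSupport
    (HasCompactSupport.of_compactSpace _)

variable [DecidableEq ι]

theorem sum_sphereMoment_self [IsProbabilityMeasure σ] :
    ∑ x : ι → κ, sphereMoment b σ x x = 1 := by
  simp only [sphereMoment]
  rw [← integral_finsetSum _ fun x _ ↦ integrable_tensorPowerCoord_mul_conj b σ x x]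
  simp only [mul_comm (tensorPowerCoord b _ _), sum_conj_tensorPowerCoord_mul]
  simp [inner_self_eq_norm_sq_to_K]

theorem sum_sphereMoment_mul_conj_tensorPowerCoord_mul [IsFiniteMeasure σ] (v : E) :
    ∑ x : ι → κ, ∑ y, sphereMoment b σ x y *
        (conj (tensorPowerCoord b v x) * tensorPowerCoord b v y) =
      ∫ ψ, ‖⟪v, (ψ : E)⟫_ℂ‖ ^ (2 * Fintype.card ι) ∂σ := by
  have integrable (x y : ι → κ) := (integrable_tensorPowerCoord_mul_conj b σ x y).mul_const
    (conj (tensorPowerCoord b v x) * tensorPowerCoord b v y)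
  have pointwise (ψ : E) : ∑ x : ι → κ, ∑ y : ι → κ,
      tensorPowerCoord b ψ x * conj (tensorPowerCoord b ψ y) *
        (conj (tensorPowerCoord b v x) * tensorPowerCoord b v y) =
      ((‖⟪v, ψ⟫_ℂ‖ ^ (2 * Fintype.card ι) : ℝ) : ℂ) := by
    calc
      _ = (∑ x : ι → κ, conj (tensorPowerCoord b v x) * tensorPowerCoord b ψ x) *
          ∑ y : ι → κ, conj (tensorPowerCoord b ψ y) * tensorPowerCoord b v y := by
        rw [Finset.sum_mul_sum]
        exact Finset.sum_congr rfl fun x _ ↦ Finset.sum_congr rfl fun y _ ↦ by ring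
      _ = (⟪v, ψ⟫_ℂ * conj ⟪v, ψ⟫_ℂ) ^ Fintype.card ι := by
        rw [sum_conj_tensorPowerCoord_mul, sum_conj_tensorPowerCoord_mul, inner_conj_symm,
          mul_pow]
      _ = _ := by
        rw [Complex.mul_conj', pow_mul]
        norm_cast
  rw [← integral_complex_ofReal]
  simp only [← pointwise, sphereMoment, ← integral_mul_const]
  rw [integral_finsetSum _ fun x _ ↦ integrable_finsetSum _ fun y _ ↦ integrable x y]
  exact Finset.sum_congr rfl fun x _ ↦ (integral_finsetSum _ fun y _ ↦ integrable x y).symm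

variable {σ}

theorem factorial_mul_sphereMoment [DecidableEq κ] [IsFiniteMeasure σ]
    (hσ : IsUnitarilyInvariant σ) {u : E} (hu : ‖u‖ = 1) (x y : ι → κ) :
    (Fintype.card ι)! * sphereMoment b σ x y =
      (∫ ψ, ‖⟪u, (ψ : E)⟫_ℂ‖ ^ (2 * Fintype.card ι) ∂σ : ℝ) * permCount x y := by
  have : FiniteDimensional ℂ E := b.toBasis.finiteDimensional_of_finite
  set c : ℝ := ∫ ψ, ‖⟪u, (ψ : E)⟫_ℂ‖ ^ (2 * Fintype.card ι) ∂σ with hc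
  refine sub_eq_zero.mp <| eq_zero_of_sum_mul_conj_prod_mul_prod_eq_zero
    (G := fun x y ↦ (Fintype.card ι)! * sphereMoment b σ x y - c * permCount x y)
    (fun x y π ↦ by simp only [sphereMoment_comp_perm_left, permCount_comp_perm_left])
    (fun x y π ↦ by simp only [sphereMoment_comp_perm_right, permCount_comp_perm_right])
    (fun v ↦ ?_) x y
  let w : E := b.repr.symm (WithLp.toLp 2 v)
  have prod_eq (z : ι → κ) : ∏ i, v (z i) = tensorPowerCoord b w z := by
    simp [tensorPowerCoord, w]
  simp only [prod_eq, sub_mul, mul_assoc, Finset.sum_sub_distrib, ← Finset.mul_sum,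
    sum_sphereMoment_mul_conj_tensorPowerCoord_mul, sum_permCount_mul_conj_tensorPowerCoord_mul,
    integral_norm_inner_pow hσ _ hu w, ← hc]
  push_cast
  ring

theorem choose_mul_integral_norm_inner_pow [FiniteDimensional ℂ E] [IsProbabilityMeasure σ]
    (hσ : IsUnitarilyInvariant σ) {u : E} (hu : ‖u‖ = 1) (n : ℕ) :
    ((n + Module.finrank ℂ E - 1).choose n : ℝ) * ∫ ψ, ‖⟪u, (ψ : E)⟫_ℂ‖ ^ (2 * n) ∂σ = 1 := by
  set c : ℝ := ∫ ψ, ‖⟪u, (ψ : E)⟫_ℂ‖ ^ (2 * n) ∂σ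
  let b := stdOrthonormalBasis ℂ E
  have moment_eq (x : Fin n → Fin (Module.finrank ℂ E)) :
      (n ! : ℂ) * sphereMoment b σ x x = c * permCount x x := by
    simpa only [Fintype.card_fin] using factorial_mul_sphereMoment b hσ hu x x
  have trace_eq := Finset.sum_congr rfl fun x (_ : x ∈ univ) ↦ moment_eq x
  rw [← Finset.mul_sum, ← Finset.mul_sum, ← Nat.cast_sum, sum_sphereMoment_self,
    sum_permCount_self, Fintype.card_fin, Fintype.card_fin] at trace_eq
  norm_cast at trace_eq
  push_cast at trace_eq
  exact mul_left_cancel₀ (Nat.cast_ne_zero.mpr n.factorial_ne_zero)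
    (by linear_combination -trace_eq)

theorem sphere_integral_symmetric_projector_general [DecidableEq κ] [IsProbabilityMeasure σ]
    (hσ : IsUnitarilyInvariant σ) (x y : ι → κ) :
    ((Fintype.card ι + Fintype.card κ - 1).choose (Fintype.card ι) : ℂ) * sphereMoment b σ x y =
      permCount x y / (Fintype.card ι)! := by
  have : FiniteDimensional ℂ E := b.toBasis.finiteDimensional_of_finite
  obtain ⟨u⟩ : Nonempty (Metric.sphere (0 : E) 1) := nonempty_of_isProbabilityMeasure σ
  have hu : ‖(u : E)‖ = 1 := norm_eq_of_mem_sphere u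
  have moment_eq := factorial_mul_sphereMoment b hσ hu x y
  have choose_mul := congrArg ((↑) : ℝ → ℂ)
    (choose_mul_integral_norm_inner_pow hσ hu (Fintype.card ι))
  rw [Module.finrank_eq_card_basis b.toBasis] at choose_mul
  push_cast at moment_eq choose_mul
  rw [eq_div_iff (Nat.cast_ne_zero.mpr (Nat.factorial_ne_zero _))]
  linear_combination
    ((Fintype.card ι + Fintype.card κ - 1).choose (Fintype.card ι) : ℂ) * moment_eq +
      permCount x y * choose_mul

end SphereMoments

/-- If `σ` is the rotation-invariant probability measure on the unit sphere of
`ℂ^d`, then `C(n+d−1,n)` times the average over `ψ` of the `(x,y)` entry of the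
rank-one projector onto `ψ^⊗n` equals the `(x,y)` entry of the projector onto
the symmetric subspace of `(ℂ^d)^⊗n`, namely `#{π : x ∘ π = y} / n!`. -/
theorem sphere_integral_symmetric_projector {d : ℕ} (hd : 1 ≤ d)
    (σ : Measure (Metric.sphere (0 : EuclideanSpace ℂ (Fin d)) 1))
    [IsProbabilityMeasure σ]
    (hσ : ∀ U : EuclideanSpace ℂ (Fin d) ≃ₗᵢ[ℂ] EuclideanSpace ℂ (Fin d),
      Measure.map (fun ψ : Metric.sphere (0 : EuclideanSpace ℂ (Fin d)) 1 =>
        (⟨U ψ, by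
          simp [mem_sphere_zero_iff_norm, U.norm_map,
            mem_sphere_zero_iff_norm.mp ψ.2]⟩ :
          Metric.sphere (0 : EuclideanSpace ℂ (Fin d)) 1)) σ = σ)
    (n : ℕ) (x y : Fin n → Fin d) :
    ((n + d - 1).choose n : ℂ) *
      ∫ ψ : Metric.sphere (0 : EuclideanSpace ℂ (Fin d)) 1,
        (∏ i : Fin n, (ψ : EuclideanSpace ℂ (Fin d)) (x i)) *
          (starRingEnd ℂ) (∏ i : Fin n, (ψ : EuclideanSpace ℂ (Fin d)) (y i)) ∂σ
      = ((Finset.univ.filter (fun π : Equiv.Perm (Fin n) => x ∘ π = y)).card : ℂ)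
          / (n.factorial : ℂ) := by
  simpa only [permCount, sphereMoment, tensorPowerCoord, EuclideanSpace.basisFun_repr,
    Fintype.card_fin] using
    sphere_integral_symmetric_projector_general (EuclideanSpace.basisFun (Fin d) ℂ) hσ x y
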